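/- Let d ≥ 1, let b : ℝ^d → ℝ^d be L-Lipschitz (L > 0) and satisfy ⟨b(x), x⟩ ≤ M₂ − M₁|x|² for all x ∈ ℝ^d, with constants M₁, M₂ > 0. Let h > 0, let X be an ℝ^d-valued random variable with 𝔼|X|² < ∞, and let ξ be independent of X with law the d-fold product of standard Gaussians N(0,1). Then 𝔼|X + h·b(X) + √h·ξ|² ≤ (1 + 4h²L² − 2M₁h)·𝔼|X|² + 4h²|b(0)|² + 2hd + 2hM₂. -/

import Mathlib

open MeasureTheory ProbabilityTheory

/-- Standard Gaussian measure `N(0, I)` on `EuclideanSpace ℝ (Fin d)`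
(the `d`-fold product of standard Gaussians `N(0,1)`). -/
noncomputable def stdGaussian (d : ℕ) : Measure (EuclideanSpace ℝ (Fin d)) :=
  (Measure.pi fun _ : Fin d => gaussianReal 0 1).map
    (MeasurableEquiv.toLp 2 (Fin d → ℝ))

/-!
Since `ξ` is centred and independent of `X`, the drift step `X + h b(X)` and the noise `√h ξ` are
orthogonal in `L²`, so the second moment is that of the drift step plus `h 𝔼‖ξ‖²`. The drift step
is bounded pointwise: the Lyapunov condition controls the cross term `2h⟨b(X), X⟩`, and the linear
growth `‖b x‖ ≤ L‖x‖ + B` controls `h²‖b(X)‖²`. A Lipschitz drift grows linearly with `B = ‖b 0‖`.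
-/

open scoped InnerProductSpace

section Drift

lemma memLp_add_smul_of_linear_growth {E : Type*} [NormedAddCommGroup E] [NormedSpace ℝ E]
    [MeasurableSpace E] [BorelSpace E] [SecondCountableTopology E]
    {Ω : Type*} {mΩ : MeasurableSpace Ω} {μ : Measure Ω} [IsFiniteMeasure μ] {p : ENNReal}
    {b : E → E} {L B : ℝ} {X : Ω → E}
    (hb : Measurable b) (hgrowth : ∀ x, ‖b x‖ ≤ L * ‖x‖ + B) (hX : MemLp X p μ) (h : ℝ) :
    MemLp (fun ω ↦ X ω + h • b (X ω)) p μ := by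
  have hbX : MemLp (fun ω ↦ b (X ω)) p μ :=
    ((hX.norm.const_mul L).add (memLp_const B)).mono'
      (hb.comp_aemeasurable hX.aestronglyMeasurable.aemeasurable).aestronglyMeasurable
      (.of_forall fun ω ↦ hgrowth (X ω))
  exact hX.add (hbX.const_smul h)

variable {E : Type*} [NormedAddCommGroup E] [InnerProductSpace ℝ E] {L B M₁ M₂ h : ℝ}

lemma norm_add_smul_sq_le {x v : E} (hv : ‖v‖ ≤ L * ‖x‖ + B)
    (hvx : ⟪v, x⟫_ℝ ≤ M₂ - M₁ * ‖x‖ ^ 2) (hh : 0 ≤ h) :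
    ‖x + h • v‖ ^ 2 ≤
      (1 + 2 * h ^ 2 * L ^ 2 - 2 * M₁ * h) * ‖x‖ ^ 2 + (2 * h ^ 2 * B ^ 2 + 2 * h * M₂) := by
  have hv_sq : ‖v‖ ^ 2 ≤ 2 * ((L * ‖x‖) ^ 2 + B ^ 2) :=
    (pow_le_pow_left₀ (norm_nonneg v) hv 2).trans add_sq_le
  calc ‖x + h • v‖ ^ 2
      = ‖x‖ ^ 2 + 2 * h * ⟪v, x⟫_ℝ + h ^ 2 * ‖v‖ ^ 2 := by
        rw [norm_add_sq_real, inner_smul_right, norm_smul, mul_pow, real_inner_comm,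
          Real.norm_eq_abs, sq_abs]
        ring
    _ ≤ ‖x‖ ^ 2 + 2 * h * (M₂ - M₁ * ‖x‖ ^ 2) + h ^ 2 * (2 * ((L * ‖x‖) ^ 2 + B ^ 2)) := by
        gcongr
    _ = _ := by ring

lemma integral_norm_add_smul_sq_le [MeasurableSpace E] [BorelSpace E] [SecondCountableTopology E]
    {Ω : Type*} {mΩ : MeasurableSpace Ω} {μ : Measure Ω} [IsProbabilityMeasure μ]
    {b : E → E} {X : Ω → E} (hb : Measurable b)
    (hgrowth : ∀ x, ‖b x‖ ≤ L * ‖x‖ + B) (hLyap : ∀ x, ⟪b x, x⟫_ℝ ≤ M₂ - M₁ * ‖x‖ ^ 2)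
    (hh : 0 ≤ h) (hX : MemLp X 2 μ) :
    ∫ ω, ‖X ω + h • b (X ω)‖ ^ 2 ∂μ ≤
      (1 + 2 * h ^ 2 * L ^ 2 - 2 * M₁ * h) * ∫ ω, ‖X ω‖ ^ 2 ∂μ
        + (2 * h ^ 2 * B ^ 2 + 2 * h * M₂) := by
  have hXsq : Integrable (fun ω ↦ ‖X ω‖ ^ 2) μ := hX.integrable_norm_pow two_ne_zero
  calc ∫ ω, ‖X ω + h • b (X ω)‖ ^ 2 ∂μ
      ≤ ∫ ω, (1 + 2 * h ^ 2 * L ^ 2 - 2 * M₁ * h) * ‖X ω‖ ^ 2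
          + (2 * h ^ 2 * B ^ 2 + 2 * h * M₂) ∂μ :=
        integral_mono
          ((memLp_add_smul_of_linear_growth hb hgrowth hX h).integrable_norm_pow two_ne_zero)
          ((hXsq.const_mul _).add (integrable_const _))
          fun ω ↦ norm_add_smul_sq_le (hgrowth (X ω)) (hLyap (X ω)) hh
    _ = _ := by
        rw [integral_add (hXsq.const_mul _) (integrable_const _), integral_const_mul,
          integral_const, probReal_univ, one_smul]

end Drift

section Noise

variable {E : Type*} [NormedAddCommGroup E] [InnerProductSpace ℝ E] [MeasurableSpace E]
  [BorelSpace E]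

lemma integral_norm_add_sq_of_indepFun [CompleteSpace E] {Ω : Type*} {mΩ : MeasurableSpace Ω}
    {μ : Measure Ω} [IsFiniteMeasure μ] {X Y : Ω → E} (hXY : IndepFun X Y μ)
    (hX : MemLp X 2 μ) (hY : MemLp Y 2 μ) (hY0 : ∫ ω, Y ω ∂μ = 0) :
    ∫ ω, ‖X ω + Y ω‖ ^ 2 ∂μ = ∫ ω, ‖X ω‖ ^ 2 ∂μ + ∫ ω, ‖Y ω‖ ^ 2 ∂μ := by
  have hXint : Integrable X μ := hX.integrable one_le_two
  have hYint : Integrable Y μ := hY.integrable one_le_two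
  have hinner : Integrable (fun ω ↦ ⟪X ω, Y ω⟫_ℝ) μ :=
    hXY.integrable_bilin hXint hYint (innerSL ℝ)
  have hinner0 : ∫ ω, ⟪X ω, Y ω⟫_ℝ ∂μ = 0 := by
    calc ∫ ω, ⟪X ω, Y ω⟫_ℝ ∂μ = ⟪∫ ω, X ω ∂μ, ∫ ω, Y ω ∂μ⟫_ℝ :=
          hXY.integral_bilin hXint hYint (innerSL ℝ)
      _ = 0 := by rw [hY0, inner_zero_right]
  have hXsq : Integrable (fun ω ↦ ‖X ω‖ ^ 2) μ := hX.integrable_norm_pow two_ne_zero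
  have hYsq : Integrable (fun ω ↦ ‖Y ω‖ ^ 2) μ := hY.integrable_norm_pow two_ne_zero
  simp_rw [norm_add_sq_real]
  rw [integral_add (by fun_prop) hYsq, integral_add hXsq (hinner.const_mul 2),
    integral_const_mul, hinner0, mul_zero, add_zero]

variable [FiniteDimensional ℝ E]

lemma integral_inner_sq_stdGaussian (v : E) :
    ∫ x, ⟪v, x⟫_ℝ ^ 2 ∂ProbabilityTheory.stdGaussian E = ‖v‖ ^ 2 := by
  rw [← innerSL_apply_norm ℝ v, ← variance_dual_stdGaussian,
    variance_of_integral_eq_zero (by fun_prop) (integral_strongDual_stdGaussian _)]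
  rfl

lemma integral_norm_sq_stdGaussian :
    ∫ x, ‖x‖ ^ 2 ∂ProbabilityTheory.stdGaussian E = Module.finrank ℝ E := by
  let e := stdOrthonormalBasis ℝ E
  have hsq_integrable (v : E) :
      Integrable (fun x ↦ ⟪v, x⟫_ℝ ^ 2) (ProbabilityTheory.stdGaussian E) :=
    (IsGaussian.memLp_two_id.const_inner v).integrable_sq
  simp_rw [← e.sum_sq_inner_right]
  rw [integral_finsetSum _ fun i _ ↦ hsq_integrable (e i)]
  simp [integral_inner_sq_stdGaussian]

end Noise

lemma stdGaussian_eq_stdGaussian_euclideanSpace (d : ℕ) :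
    _root_.stdGaussian d = ProbabilityTheory.stdGaussian (EuclideanSpace ℝ (Fin d)) :=
  map_pi_eq_stdGaussian

theorem euler_one_step_second_moment_general
    {E : Type*} [NormedAddCommGroup E] [InnerProductSpace ℝ E] [CompleteSpace E]
    [MeasurableSpace E] [BorelSpace E] [SecondCountableTopology E]
    {Ω : Type*} {mΩ : MeasurableSpace Ω} {μ : Measure Ω} [IsProbabilityMeasure μ]
    {b : E → E} {L B M₁ M₂ h : ℝ} (hb : Measurable b) (hgrowth : ∀ x, ‖b x‖ ≤ L * ‖x‖ + B)
    (hLyap : ∀ x, ⟪b x, x⟫_ℝ ≤ M₂ - M₁ * ‖x‖ ^ 2) (hh : 0 ≤ h)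
    {X ξ : Ω → E} (hX : MemLp X 2 μ) (hξ : MemLp ξ 2 μ) (hξ0 : ∫ ω, ξ ω ∂μ = 0)
    (hindep : IndepFun X ξ μ) :
    ∫ ω, ‖X ω + h • b (X ω) + √h • ξ ω‖ ^ 2 ∂μ ≤
      (1 + 2 * h ^ 2 * L ^ 2 - 2 * M₁ * h) * ∫ ω, ‖X ω‖ ^ 2 ∂μ
        + (2 * h ^ 2 * B ^ 2 + 2 * h * M₂) + h * ∫ ω, ‖ξ ω‖ ^ 2 ∂μ := by
  have hdrift : MemLp (fun ω ↦ X ω + h • b (X ω)) 2 μ :=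
    memLp_add_smul_of_linear_growth hb hgrowth hX h
  have hindep' : IndepFun (fun ω ↦ X ω + h • b (X ω)) (fun ω ↦ √h • ξ ω) μ :=
    hindep.comp (φ := fun x ↦ x + h • b x) (ψ := fun x ↦ √h • x) (by fun_prop) (by fun_prop)
  have hnoise : ∫ ω, ‖√h • ξ ω‖ ^ 2 ∂μ = h * ∫ ω, ‖ξ ω‖ ^ 2 ∂μ := by
    simp_rw [norm_smul, mul_pow, Real.norm_eq_abs, sq_abs, Real.sq_sqrt hh, integral_const_mul]
  rw [integral_norm_add_sq_of_indepFun hindep' hdrift (hξ.const_smul (√h))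
    (by rw [integral_smul, hξ0, smul_zero]), hnoise]
  gcongr
  exact integral_norm_add_smul_sq_le hb hgrowth hLyap hh hX

/-- **Lemma (one-step second-moment estimate for the Euler scheme).**
If `b` is `L`-Lipschitz and satisfies the Lyapunov condition
`⟨b x, x⟩ ≤ M₂ - M₁‖x‖²`, `X` is square integrable and `ξ` is an independent standard
Gaussian vector, then
`𝔼‖X + h b(X) + √h ξ‖² ≤ (1 + 4h²L² - 2M₁h) 𝔼‖X‖² + 4h²‖b 0‖² + 2hd + 2hM₂`. -/
theorem euler_one_step_second_moment
    {d : ℕ} (hd : 1 ≤ d) (b : EuclideanSpace ℝ (Fin d) → EuclideanSpace ℝ (Fin d))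
    (L M₁ M₂ : ℝ) (hL : 0 < L) (hM₁ : 0 < M₁) (hM₂ : 0 < M₂)
    (hLip : ∀ x y : EuclideanSpace ℝ (Fin d), ‖b x - b y‖ ≤ L * ‖x - y‖)
    (hLyap : ∀ x : EuclideanSpace ℝ (Fin d),
      @inner ℝ _ _ (b x) x ≤ M₂ - M₁ * ‖x‖ ^ 2)
    (h : ℝ) (hh : 0 < h)
    {Ω : Type*} [MeasureSpace Ω] [IsProbabilityMeasure (ℙ : Measure Ω)]
    (X ξ : Ω → EuclideanSpace ℝ (Fin d))
    (hXmeas : Measurable X) (hξmeas : Measurable ξ)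
    (hXsq : Integrable (fun ω => ‖X ω‖ ^ 2) ℙ)
    (hξlaw : Measure.map ξ ℙ = stdGaussian d)
    (hindep : IndepFun X ξ ℙ) :
    ∫ ω, ‖X ω + h • b (X ω) + Real.sqrt h • ξ ω‖ ^ 2 ∂ℙ
      ≤ (1 + 4 * h ^ 2 * L ^ 2 - 2 * M₁ * h) * ∫ ω, ‖X ω‖ ^ 2 ∂ℙ
        + 4 * h ^ 2 * ‖b 0‖ ^ 2 + 2 * h * d + 2 * h * M₂ := by
  have hb : Measurable b :=
    (LipschitzWith.of_dist_le' (by simpa only [dist_eq_norm] using hLip)).continuous.measurable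
  have hgrowth (x) : ‖b x‖ ≤ L * ‖x‖ + ‖b 0‖ := by
    simpa using (norm_le_norm_sub_add (b x) (b 0)).trans (add_le_add_left (hLip x 0) _)
  have hX : MemLp X 2 ℙ := (memLp_two_iff_integrable_sq_norm hXmeas.aestronglyMeasurable).2 hXsq
  have hξ : HasLaw ξ (ProbabilityTheory.stdGaussian (EuclideanSpace ℝ (Fin d))) ℙ :=
    ⟨hξmeas.aemeasurable, hξlaw.trans (stdGaussian_eq_stdGaussian_euclideanSpace d)⟩
  have hξ_memLp : MemLp ξ 2 ℙ :=
    (IsGaussian.memLp_two_id (μ := ProbabilityTheory.stdGaussian _)).comp_measurePreserving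
      (hξ.measurePreserving hξmeas)
  have hξ_mean : ∫ ω, ξ ω = 0 := hξ.integral_eq.trans integral_id_stdGaussian
  have hξ_sq : ∫ ω, ‖ξ ω‖ ^ 2 = d :=
    (hξ.integral_comp (f := (‖·‖ ^ 2)) (by fun_prop)).trans (by simp [integral_norm_sq_stdGaussian])
  have hsharp :=
    euler_one_step_second_moment_general hb hgrowth hLyap hh.le hX hξ_memLp hξ_mean hindep
  rw [hξ_sq] at hsharp
  have : 0 ≤ 2 * h ^ 2 * L ^ 2 * ∫ ω, ‖X ω‖ ^ 2 := by positivity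
  have : 0 ≤ 2 * h ^ 2 * ‖b 0‖ ^ 2 := by positivity
  have : 0 ≤ h * d := by positivity
  linarith
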